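/- Injectivity of the leakage transformer in its first argument: for every directive list d and all observation lists o1, o2, if Tobs(o1, d) = Tobs(o2, d) then o1 = o2. -/

import Mathlib

namespace SPS

/-- Directives: adversarial branch predictions. -/
inductive Dirc where
  | force (b : Bool)
deriving DecidableEq

/-- Observations: leaked branch conditions and leaked addresses. -/
inductive Obs where
  | branch (b : Bool)
  | addr (n : Nat)
deriving DecidableEq

/-- The leakage transformer `Tobs`. -/
def Tobs : List Obs → List Dirc → List Obs
  | [], _ => []
  | .addr n :: o, d => .addr n :: Tobs o d
  | .branch b :: o, .force b' :: d => .branch b :: .branch b' :: Tobs o d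
  | .branch b :: o, [] => .branch b :: Tobs o []

/-- **Injectivity of the leakage transformer in its first argument**: for every
directive list `d` and all observation lists `o1`, `o2`, if
`Tobs(o1, d) = Tobs(o2, d)` then `o1 = o2`. -/
theorem Tobs_injective (d : List Dirc) (o1 o2 : List Obs)
    (h : Tobs o1 d = Tobs o2 d) : o1 = o2 := by
  -- `d` is generalized because a consumed branch leaves only its tail for the rest.
  induction o1 generalizing d o2 with
  | nil =>
    rcases o2 with _ | ⟨_ | _, o2⟩ <;> rcases d with _ | ⟨_, d⟩ <;> simp_all [Tobs]
  | cons a o1 ih =>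
    -- The head of the output is the head of the input, so the heads agree; hence both
    -- sides consume the same directive and the induction hypothesis applies to the tails.
    rcases a with b | n <;> rcases o2 with _ | ⟨b2 | n2, o2⟩ <;>
      rcases d with _ | ⟨⟨b'⟩, d⟩ <;> simp [Tobs] at h ⊢ <;>
      exact ⟨h.1, ih _ _ h.2⟩

end SPS
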